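/- arXiv:1605.00978 — 2 statements merged into one kernel-verified Lean document; each statement's English description precedes it below -/
import Mathlib

section
/- A D-flag 𝒟 = (D_0,…,D_m) is admissible if and only if there exist standard modules 𝓜_0 ⊆ 𝓜_m with 𝔪𝓜_m ⊆ 𝓜_0, D_{𝓜_0} = D_0 and D_{𝓜_m} = D_m. -/
open PowerSeries

noncomputable section

/-- `𝒪 = ℂ⟦z⟧`, the ring of formal power series over `ℂ`. -/
abbrev 𝒪 : Type := PowerSeries ℂ

/-- `ν(f)`: the order of a power series (least `n` with nonzero coefficient);
only meaningful for `f ≠ 0`. -/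
noncomputable def ord (f : 𝒪) : ℕ := sInf {n : ℕ | PowerSeries.coeff n f ≠ 0}

/-- The value semigroup `Γ = {ν(x) : 0 ≠ x ∈ ℛ}` of a subalgebra `ℛ ⊆ 𝒪`. -/
def SGamma (R : Subalgebra ℂ 𝒪) : Set ℕ := {n | ∃ x ∈ R, x ≠ (0:𝒪) ∧ ord x = n}

/-- The set of gaps `G = ℕ ∖ Γ`. -/
def Gaps (R : Subalgebra ℂ 𝒪) : Set ℕ := (SGamma R)ᶜ

/-- `Δ` is a `Γ`-module: `Γ + Δ ⊆ Δ`. -/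
def IsGammaModule (Γ Δ : Set ℕ) : Prop := ∀ a ∈ Γ, ∀ d ∈ Δ, a + d ∈ Δ

/-- `Δ_𝓜 = {ν(x) : 0 ≠ x ∈ 𝓜}` for an `ℛ`-submodule `𝓜 ⊆ 𝒪`. -/
def DeltaM (R : Subalgebra ℂ 𝒪) (M : Submodule ↥R 𝒪) : Set ℕ :=
  {n | ∃ x ∈ M, x ≠ (0:𝒪) ∧ ord x = n}

/-- `D_𝓜 = Δ_𝓜 ∩ G`, the set of added gaps. -/
def Dset (R : Subalgebra ℂ 𝒪) (M : Submodule ↥R 𝒪) : Set ℕ := DeltaM R M ∩ Gaps R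

/-- A standard module: a finitely generated `ℛ`-submodule of `𝒪` containing an
element of order `0`. -/
def IsStd (R : Subalgebra ℂ 𝒪) (M : Submodule ↥R 𝒪) : Prop :=
  M.FG ∧ ∃ x ∈ M, x ≠ (0:𝒪) ∧ ord x = 0

/-- `c ≥ 1` is the conductor of `ℛ`: the minimal exponent with `z^c𝒪 ⊆ ℛ`. -/
def HasConductor (R : Subalgebra ℂ 𝒪) (c : ℕ) : Prop :=
  1 ≤ c ∧ (∀ f : 𝒪, (PowerSeries.X : 𝒪)^c * f ∈ R) ∧
    ∀ c' : ℕ, (∀ f : 𝒪, (PowerSeries.X : 𝒪)^c' * f ∈ R) → c ≤ c'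

/-- `z^j𝒪` as a `ℂ`-submodule of `𝒪`. -/
def zO (j : ℕ) : Submodule ℂ 𝒪 :=
  LinearMap.range (LinearMap.mulLeft ℂ ((PowerSeries.X : 𝒪)^j))

/-- `𝔪𝓜` as a `ℂ`-submodule of `𝒪`, where `𝔪 = {x ∈ ℛ : x = 0 or ν(x) > 0}`
is the maximal ideal of `ℛ`. -/
def mSmul (R : Subalgebra ℂ 𝒪) (M : Submodule ↥R 𝒪) : Submodule ℂ 𝒪 :=
  Submodule.span ℂ {z : 𝒪 | ∃ r ∈ (R : Set 𝒪), ∃ y ∈ M, (r = 0 ∨ 0 < ord r) ∧ z = r * y}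

/-- `dim_ℂ (A / B)` for `ℂ`-subspaces; intended for `B ≤ A`. -/
noncomputable def quotDim (A B : Submodule ℂ 𝒪) : ℕ :=
  Module.finrank ℂ (↥A ⧸ Submodule.comap A.subtype B)

/-- `D_i = D_0 ∪ {g_1, …, g_i}` (the gaps `g` are indexed by `1, …, m`). -/
def DFlagSet (D0 : Set ℕ) (g : ℕ → ℕ) (i : ℕ) : Set ℕ := D0 ∪ g '' Set.Icc 1 i

/-- `(D_0, …, D_m)` with `D_i = D_0 ∪ {g_1 < … < g_i}` is a `D`-flag:
all `Δ_i = Γ ∪ D_i` are `Γ`-modules. -/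
def IsDFlag (R : Subalgebra ℂ 𝒪) (m : ℕ) (D0 : Set ℕ) (g : ℕ → ℕ) : Prop :=
  D0 ⊆ Gaps R ∧ StrictMonoOn g (Set.Icc 1 m) ∧
  (∀ i, 1 ≤ i → i ≤ m → g i ∈ Gaps R \ D0) ∧
  (∀ i ≤ m, IsGammaModule (SGamma R) (SGamma R ∪ DFlagSet D0 g i))

/-- A `D`-flag is admissible if it is realized by a flag of standard modules. -/
def IsAdmissibleFlag (R : Subalgebra ℂ 𝒪) (m : ℕ) (D0 : Set ℕ) (g : ℕ → ℕ) : Prop :=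
  ∃ MM : ℕ → Submodule ↥R 𝒪, (∀ i, i < m → MM i ≤ MM (i+1)) ∧
    ∀ i ≤ m, IsStd R (MM i) ∧ Dset R (MM i) = DFlagSet D0 g i

/-- The subalgebra `ℂ[z^a, z^b + z^c] + z^N ℂ⟦z⟧` of `𝒪`. -/
def Rring (a b c N : ℕ) : Subalgebra ℂ 𝒪 where
  carrier := {f : 𝒪 | ∃ p ∈ Algebra.adjoin ℂ
      ({(PowerSeries.X : 𝒪)^a, (PowerSeries.X : 𝒪)^b + (PowerSeries.X : 𝒪)^c} : Set 𝒪),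
    ∃ g : 𝒪, f = p + (PowerSeries.X : 𝒪)^N * g}
  mul_mem' := by
    rintro x y ⟨p, hp, gx, rfl⟩ ⟨q, hq, gy, rfl⟩
    exact ⟨p * q, mul_mem hp hq,
      p * gy + gx * q + (PowerSeries.X : 𝒪)^N * (gx * gy), by ring⟩
  one_mem' := ⟨1, one_mem _, 0, by ring⟩
  add_mem' := by
    rintro x y ⟨p, hp, gx, rfl⟩ ⟨q, hq, gy, rfl⟩
    exact ⟨p + q, add_mem hp hq, gx + gy, by ring⟩
  zero_mem' := ⟨0, zero_mem _, 0, by ring⟩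
  algebraMap_mem' := fun r => ⟨algebraMap ℂ 𝒪 r, Subalgebra.algebraMap_mem _ r, 0, by ring⟩

/-- The ring `ℂ⟦z^4, z^{2u}+z^v⟧ = ℂ[z^4, z^{2u}+z^v] + z^{4u+v}ℂ⟦z⟧` for the
plane curve singularity with Puiseux exponents `(4, 2u, v)`. -/
def Rcal (u v : ℕ) : Subalgebra ℂ 𝒪 := Rring 4 (2*u) v (4*u+v)

/-- The gap counting function `γ_Δ(ℓ) = |[ℓ,∞) ∖ Δ|`. -/
noncomputable def gapCount (Δ : Set ℕ) (ℓ : ℕ) : ℕ := Set.ncard {k : ℕ | ℓ ≤ k ∧ k ∉ Δ}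

/-- `n = n(D)`: the smallest odd number in `(Δ ∪ {v}) ∩ [2u, ∞)`. -/
noncomputable def nOdd (u v : ℕ) (Δ : Set ℕ) : ℕ :=
  sInf {k : ℕ | Odd k ∧ 2*u ≤ k ∧ (k ∈ Δ ∨ k = v)}

/-- The dimension change `μ_{D,g}` of Theorem `dimprop` (for the family `(4,2u,v)`),
where `Γ` is the value semigroup. -/
noncomputable def muDim (u v : ℕ) (Γ : Set ℕ) (D : Set ℕ) (gp : ℕ) : ℕ :=
  let Δ : Set ℕ := Γ ∪ D
  let Δ' : Set ℕ := Δ ∪ {gp}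
  let n : ℕ := nOdd u v Δ
  if gp % 4 = 2 then
    (gapCount Δ' gp - gapCount Δ' (gp+4)) - (gapCount Δ' (gp+n) - gapCount Δ' (gp+4+n))
  else gapCount Δ' gp - gapCount Δ' (gp+4)


/-!
Since a standard module `M` satisfies `Δ_M = Γ ∪ D_M`, prescribing `D_M` amounts to prescribing the
value set, and the whole question can be put in terms of value sets over an arbitrary field `K`. The
argument rests on a comparison principle: if `M ≤ N` are `K`-subspaces of `K⟦X⟧`, `M` contains all
series of large order, and every value of `N` from `b` on is a value of `M`, then every element of
`N` of order at least `b` lies in `M`. In particular, elements realising sufficiently many values of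
an `R`-module generate it, so finite generation is automatic.

If `M ≤ N` are consecutive members of a flag starting at `L`, and `f ∈ N` has the new value `p`,
then `N = M + K f`. An element `r` of the maximal ideal raises orders, so `r f` has order greater
than `p`; since the gaps are added in increasing order, every value of `N` beyond `p` is a value of
`L`, and so `r f ∈ L`. Hence `𝔪 M ≤ L` implies `𝔪 N ≤ L`.

Conversely, pick `f_i ∈ M_m` of order `g_i`. As `𝔪 f_i ⊆ M_0` and `R = K + 𝔪`, adjoining `f_i` to a
module above `M_0` enlarges it by the line `K f_i` only, so that just the value `g_i` is added.
-/

section ValueSet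

variable {A : Type*} [Semiring A]

lemma natCast_le_order_iff_X_pow_dvd {y : A⟦X⟧} {n : ℕ} : (n : ℕ∞) ≤ y.order ↔ X ^ n ∣ y := by
  rw [order_eq_emultiplicity_X, pow_dvd_iff_le_emultiplicity]

/-- The value set `{ν(x) : 0 ≠ x ∈ S}` of a set `S` of power series. The zero series contributes
nothing because its order is `⊤`. -/
def valueSet {σ : Type*} [SetLike σ A⟦X⟧] (S : σ) : Set ℕ := {n | ∃ x ∈ S, x.order = n}

lemma valueSet_mono {σ : Type*} [SetLike σ A⟦X⟧] [LE σ] [IsConcreteLE σ A⟦X⟧] {S T : σ}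
    (h : S ≤ T) : valueSet S ⊆ valueSet T :=
  fun _ ⟨x, hx, hxn⟩ ↦ ⟨x, mem_of_le_of_mem h hx, hxn⟩

end ValueSet

section Ideal

variable {A : Type*} [CommRing A] {R : Subalgebra A A⟦X⟧} {N : Submodule R A⟦X⟧} {f : A⟦X⟧}

/-- The ideal `𝔪` of the elements of `R` that vanish or have positive order. -/
def positiveOrderIdeal (R : Subalgebra A A⟦X⟧) : Ideal R :=
  RingHom.ker ((constantCoeff (R := A)).comp R.val.toRingHom)

lemma mem_positiveOrderIdeal {r : R} :
    r ∈ positiveOrderIdeal R ↔ constantCoeff (r : A⟦X⟧) = 0 := Iff.rfl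

lemma sub_algebraMap_mem_positiveOrderIdeal (r : R) :
    r - algebraMap A R (constantCoeff (r : A⟦X⟧)) ∈ positiveOrderIdeal R := by
  simp [mem_positiveOrderIdeal]

lemma sup_span_singleton_restrictScalars (h : ∀ r ∈ positiveOrderIdeal R, r • f ∈ N) :
    (N ⊔ R ∙ f).restrictScalars A = N.restrictScalars A ⊔ A ∙ f := by
  refine le_antisymm (fun x hx ↦ ?_) (sup_le (fun x hx ↦ Submodule.mem_sup_left hx) ?_)
  · obtain ⟨u, hu, v, hv, rfl⟩ := Submodule.mem_sup.1 hx
    obtain ⟨r, rfl⟩ := Submodule.mem_span_singleton.1 hv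
    set a := constantCoeff (r : A⟦X⟧)
    refine Submodule.mem_sup.2 ⟨u + (r - algebraMap A R a) • f,
      N.add_mem hu (h _ (sub_algebraMap_mem_positiveOrderIdeal r)), a • f,
      Submodule.smul_mem _ a (Submodule.mem_span_singleton_self f), ?_⟩
    rw [sub_smul, algebraMap_smul]
    abel
  · exact (Submodule.span_singleton_le_iff_mem ..).2
      (Submodule.mem_sup_right (Submodule.mem_span_singleton_self f))

end Ideal

section Subspace

variable {K : Type*} [Field K] {M N : Submodule K K⟦X⟧} {c p : ℕ} {f : K⟦X⟧}

lemma dvd_of_order_le {x y : K⟦X⟧} (h : x.order ≤ y.order) : x ∣ y := by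
  obtain rfl | hx := eq_or_ne x 0
  · simp_all
  rw [← coe_toNat_order hx, natCast_le_order_iff_X_pow_dvd] at h
  rwa [← X_pow_order_mul_divXPowOrder (f := x), ← Unit_of_divided_by_X_pow_order_nonzero hx,
    Units.mul_right_dvd]

lemma exists_succ_le_order_sub_smul {x y : K⟦X⟧} {n : ℕ} (hx : x.order = n)
    (hy : (n : ℕ∞) ≤ y.order) : ∃ a : K, ((n + 1 : ℕ) : ℕ∞) ≤ (y - a • x).order := by
  obtain ⟨hxn, hxlt⟩ := order_eq_nat.1 hx
  refine ⟨coeff n y / coeff n x, nat_le_order _ _ fun k hk ↦ ?_⟩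
  rw [map_sub, map_smul, smul_eq_mul]
  obtain hk | rfl := Nat.lt_succ_iff_lt_or_eq.1 hk
  · rw [coeff_of_lt_order k ((Nat.cast_lt.2 hk).trans_le hy), hxlt k hk, mul_zero, sub_zero]
  · rw [div_mul_cancel₀ _ hxn, sub_self]

theorem mem_of_le_order (hMN : M ≤ N) (hM : ∀ y : K⟦X⟧, (c : ℕ∞) ≤ y.order → y ∈ M) {b : ℕ}
    (hb : ∀ n ∈ valueSet N, b ≤ n → n ∈ valueSet M) {y : K⟦X⟧} (hy : y ∈ N)
    (hby : (b : ℕ∞) ≤ y.order) : y ∈ M := by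
  by_cases hcb : c ≤ b
  · exact hM y ((Nat.cast_le.2 hcb).trans hby)
  obtain ⟨x, hx, hyx⟩ : ∃ x ∈ M, ((b + 1 : ℕ) : ℕ∞) ≤ (y - x).order := by
    obtain hlt | heq := hby.lt_or_eq
    · exact ⟨0, M.zero_mem, by simpa using Order.add_one_le_of_lt hlt⟩
    · obtain ⟨x, hx, hxb⟩ := hb b ⟨y, hy, heq.symm⟩ le_rfl
      obtain ⟨a, ha⟩ := exists_succ_le_order_sub_smul hxb hby
      exact ⟨a • x, M.smul_mem a hx, ha⟩
  have hyx_mem : y - x ∈ M :=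
    mem_of_le_order hMN hM (fun n hn hbn ↦ hb n hn (by lia)) (N.sub_mem hy (hMN hx)) hyx
  simpa using M.add_mem hyx_mem hx
termination_by c - b

lemma le_of_valueSet_subset (hMN : M ≤ N) (hM : ∀ y : K⟦X⟧, (c : ℕ∞) ≤ y.order → y ∈ M)
    (h : valueSet N ⊆ valueSet M) : N ≤ M :=
  fun _ hy ↦ mem_of_le_order (b := 0) hMN hM (fun _ hn _ ↦ h hn) hy (by simp)

lemma mem_valueSet_sup_span_singleton (M : Submodule K K⟦X⟧) (hf : f.order = p) :
    p ∈ valueSet (M ⊔ K ∙ f) :=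
  ⟨f, Submodule.mem_sup_right (Submodule.mem_span_singleton_self f), hf⟩

lemma le_sup_span_singleton (hMN : M ≤ N) (hM : ∀ y : K⟦X⟧, (c : ℕ∞) ≤ y.order → y ∈ M)
    (hf : f ∈ N) (hfp : f.order = p)
    (h : valueSet N ⊆ insert p (valueSet M)) : N ≤ M ⊔ K ∙ f := by
  refine le_of_valueSet_subset (sup_le hMN ((Submodule.span_singleton_le_iff_mem ..).2 hf))
    (fun y hy ↦ Submodule.mem_sup_left (hM y hy)) (h.trans (Set.insert_subset ?_ ?_))
  · exact mem_valueSet_sup_span_singleton M hfp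
  · exact valueSet_mono le_sup_left

lemma valueSet_sup_span_singleton (hf : f.order = p) (hp : p ∉ valueSet M) :
    valueSet (M ⊔ K ∙ f) = insert p (valueSet M) := by
  refine subset_antisymm ?_ (Set.insert_subset (mem_valueSet_sup_span_singleton M hf)
    (valueSet_mono le_sup_left))
  rintro n ⟨x, hx, hxn⟩
  obtain ⟨u, hu, v, hv, rfl⟩ := Submodule.mem_sup.1 hx
  obtain ⟨a, rfl⟩ := Submodule.mem_span_singleton.1 hv
  obtain rfl | ha := eq_or_ne a 0
  · exact Or.inr ⟨u, hu, by simpa using hxn⟩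
  have haf : (a • f).order = p := by
    rw [← hf]
    exact le_antisymm (by simpa [ha] using le_order_smul (φ := a • f) (a := a⁻¹)) le_order_smul
  have hne : u.order ≠ (a • f).order := fun h ↦ hp ⟨u, hu, h.trans haf⟩
  rw [order_add_of_order_ne _ _ hne, haf] at hxn
  obtain h | h := min_choice u.order p
  · exact Or.inr ⟨u, hu, h.symm.trans hxn⟩
  · exact Or.inl (Nat.cast_injective (hxn.symm.trans h))

end Subspace

section Module

variable {K : Type*} [Field K] {R : Subalgebra K K⟦X⟧} {L M N : Submodule R K⟦X⟧}
  {c p : ℕ} {f : K⟦X⟧}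

lemma valueSet_sup_span_singleton_of_smul_mem (h : ∀ r ∈ positiveOrderIdeal R, r • f ∈ N)
    (hf : f.order = p) (hp : p ∉ valueSet N) : valueSet (N ⊔ R ∙ f) = insert p (valueSet N) := by
  have hval := valueSet_sup_span_singleton (M := N.restrictScalars K) hf hp
  rwa [← sup_span_singleton_restrictScalars h] at hval

lemma mem_of_add_le_order (hR : ∀ y : K⟦X⟧, (c : ℕ∞) ≤ y.order → y ∈ R) {d : ℕ}
    (hd : d ∈ valueSet M) {y : K⟦X⟧} (hy : ((c + d : ℕ) : ℕ∞) ≤ y.order) :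
    y ∈ M := by
  obtain ⟨x, hx, hxd⟩ := hd
  push_cast at hy
  obtain ⟨q, rfl⟩ : x ∣ y := dvd_of_order_le (hxd ▸ le_add_self.trans hy)
  have hq : (c : ℕ∞) ≤ q.order := by
    rwa [order_mul, hxd, add_comm, ENat.add_le_add_iff_left (ENat.natCast_ne_top d)] at hy
  simpa [Subalgebra.smul_def, mul_comm] using M.smul_mem ⟨q, hR q hq⟩ hx

theorem fg_of_conductor (hR : ∀ y : K⟦X⟧, (c : ℕ∞) ≤ y.order → y ∈ R)
    (M : Submodule R K⟦X⟧) : M.FG := by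
  obtain rfl | hM := eq_or_ne M ⊥
  · exact Submodule.fg_bot
  obtain ⟨x, hx, hx0⟩ := M.exists_mem_ne_zero_of_ne_bot hM
  set d := x.order.toNat
  have hd : d ∈ valueSet M := ⟨x, hx, (coe_toNat_order hx0).symm⟩
  have hval : ∀ n ∈ valueSet M, ∃ f ∈ M, f.order = n := fun _ hn ↦ hn
  choose! f hfM hfn using hval
  set I := valueSet M ∩ Set.Iic (c + d)
  set N := Submodule.span R (f '' I)
  have hIN : I ⊆ valueSet N := fun n hn ↦
    ⟨f n, Submodule.subset_span ⟨n, hn, rfl⟩, hfn n hn.1⟩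
  have hNM : N ≤ M := Submodule.span_le.2 (Set.image_subset_iff.2 fun n hn ↦ hfM n hn.1)
  have hN : ∀ y : K⟦X⟧, ((c + d : ℕ) : ℕ∞) ≤ y.order → y ∈ N := fun _ hy ↦
    mem_of_add_le_order hR (hIN ⟨hd, Nat.le_add_left d c⟩) hy
  have hMN : M ≤ N := by
    refine le_of_valueSet_subset (M := N.restrictScalars K) (N := M.restrictScalars K)
      hNM hN fun n hn ↦ ?_
    obtain h | h := le_total n (c + d)
    · exact hIN ⟨hn, h⟩
    · exact ⟨X ^ n, hN _ (by simpa only [order_X_pow, Nat.cast_le] using h), order_X_pow n⟩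
  exact hMN.antisymm hNM ▸ Submodule.fg_span (((Set.finite_Iic _).inter_of_right _).image f)

lemma positiveOrderIdeal_smul_le_of_insert (hLM : L ≤ M) (hMN : M ≤ N)
    (hL : ∀ y : K⟦X⟧, (c : ℕ∞) ≤ y.order → y ∈ L)
    (hp : p ∈ valueSet N) (hNM : valueSet N ⊆ insert p (valueSet M))
    (hNL : ∀ n ∈ valueSet N, p < n → n ∈ valueSet L)
    (h : positiveOrderIdeal R • M ≤ L) : positiveOrderIdeal R • N ≤ L := by
  obtain ⟨f, hf, hfp⟩ := hp
  refine Submodule.smul_le.2 fun r hr y hy ↦ ?_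
  have hrf : r • f ∈ L := by
    refine mem_of_le_order (M := L.restrictScalars K) (N := N.restrictScalars K)
      (hLM.trans hMN) hL (b := p + 1) hNL (N.smul_mem r hf) ?_
    have hr1 : 1 ≤ (r : K⟦X⟧).order := one_le_order_iff_constCoeff_eq_zero.2 hr
    rw [Subalgebra.smul_def, smul_eq_mul, order_mul, hfp, add_comm, Nat.cast_add, Nat.cast_one]
    gcongr
  obtain ⟨u, hu, v, hv, rfl⟩ := Submodule.mem_sup.1 <|
    le_sup_span_singleton (M := M.restrictScalars K) (N := N.restrictScalars K)
      hMN (fun y hy ↦ hLM (hL y hy)) hf hfp hNM hy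
  obtain ⟨a, rfl⟩ := Submodule.mem_span_singleton.1 hv
  rw [smul_add, smul_comm r a f]
  exact L.add_mem (h (Submodule.smul_mem_smul hr hu)) ((L.restrictScalars K).smul_mem a hrf)

end Module

lemma dFlagSet_zero (D : Set ℕ) (g : ℕ → ℕ) : DFlagSet D g 0 = D := by
  simp [DFlagSet]

lemma dFlagSet_succ (D : Set ℕ) (g : ℕ → ℕ) (i : ℕ) :
    DFlagSet D g (i + 1) = insert (g (i + 1)) (DFlagSet D g i) := by
  rw [DFlagSet, ← Set.insert_Icc_right_eq_Icc_add_one (by lia), Set.image_insert_eq,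
    Set.union_insert, DFlagSet]

section Flag

variable {K : Type*} [Field K] {R : Subalgebra K K⟦X⟧} {c m : ℕ} {Δ : Set ℕ} {g : ℕ → ℕ}

theorem positiveOrderIdeal_smul_le_of_flag (hR : ∀ y : K⟦X⟧, (c : ℕ∞) ≤ y.order → y ∈ R)
    (hΔ : Δ.Nonempty) (hg : MonotoneOn g (Set.Icc 1 m)) {MM : ℕ → Submodule R K⟦X⟧}
    (hMM : MonotoneOn MM (Set.Iic m))
    (hval : ∀ i ≤ m, valueSet (MM i) = DFlagSet Δ g i) {i : ℕ} (hi : i ≤ m) :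
    positiveOrderIdeal R • MM i ≤ MM 0 := by
  have hval₀ : valueSet (MM 0) = Δ := by rw [hval 0 m.zero_le, dFlagSet_zero]
  obtain ⟨d, hd⟩ := hΔ
  induction i with
  | zero => exact Submodule.smul_le_right
  | succ i ih =>
    refine positiveOrderIdeal_smul_le_of_insert (p := g (i + 1))
      (hMM m.zero_le (Nat.le_of_succ_le hi) i.zero_le) (hMM (Nat.le_of_succ_le hi) hi i.le_succ)
      (fun y hy ↦ mem_of_add_le_order hR (hval₀ ▸ hd) hy) ?_ ?_ ?_ (ih (Nat.le_of_succ_le hi))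
    · rw [hval _ hi, dFlagSet_succ]
      exact Set.mem_insert _ _
    · rw [hval _ hi, hval _ (Nat.le_of_succ_le hi), dFlagSet_succ]
    · rw [hval _ hi, hval₀]
      rintro n (hn | ⟨j, hj, rfl⟩) hlt
      · exact hn
      · exact absurd (hg ⟨hj.1, hj.2.trans hi⟩ ⟨by lia, hi⟩ hj.2) hlt.not_ge

theorem valueSet_sup_span_image_Icc {M₀ Mm : Submodule R K⟦X⟧}
    (h : positiveOrderIdeal R • Mm ≤ M₀) (hM₀ : valueSet M₀ = Δ)
    (hg : StrictMonoOn g (Set.Icc 1 m)) (hgΔ : ∀ i ∈ Set.Icc 1 m, g i ∉ Δ)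
    {f : ℕ → K⟦X⟧} (hf : ∀ i ∈ Set.Icc 1 m, f i ∈ Mm) (hfg : ∀ i ∈ Set.Icc 1 m, (f i).order = g i)
    {i : ℕ} (hi : i ≤ m) :
    valueSet (M₀ ⊔ Submodule.span R (f '' Set.Icc 1 i)) = DFlagSet Δ g i := by
  induction i with
  | zero => simpa [dFlagSet_zero] using hM₀
  | succ i ih =>
    specialize ih (Nat.le_of_succ_le hi)
    have hi' : i + 1 ∈ Set.Icc 1 m := ⟨by lia, hi⟩
    have hnew : g (i + 1) ∉ DFlagSet Δ g i := by
      rintro (hmem | ⟨j, hj, hji⟩)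
      · exact hgΔ _ hi' hmem
      · have : j = i + 1 := hg.injOn ⟨hj.1, by grind⟩ hi' hji
        grind
    rw [← Set.insert_Icc_right_eq_Icc_add_one (by lia), Set.image_insert_eq, Submodule.span_insert,
      sup_comm (R ∙ f (i + 1)), ← sup_assoc, dFlagSet_succ, ← ih]
    exact valueSet_sup_span_singleton_of_smul_mem
      (fun r hr ↦ Submodule.mem_sup_left (h (Submodule.smul_mem_smul hr (hf _ hi'))))
      (hfg _ hi') (ih ▸ hnew)

theorem statement10_general (hR : ∀ y : K⟦X⟧, (c : ℕ∞) ≤ y.order → y ∈ R) (hΔ : Δ.Nonempty)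
    (hg : StrictMonoOn g (Set.Icc 1 m)) (hgΔ : ∀ i ∈ Set.Icc 1 m, g i ∉ Δ) :
    (∃ MM : ℕ → Submodule R K⟦X⟧, (∀ i < m, MM i ≤ MM (i + 1)) ∧
        ∀ i ≤ m, valueSet (MM i) = DFlagSet Δ g i) ↔
      ∃ M₀ Mm : Submodule R K⟦X⟧, M₀ ≤ Mm ∧ positiveOrderIdeal R • Mm ≤ M₀ ∧
        valueSet M₀ = Δ ∧ valueSet Mm = DFlagSet Δ g m := by
  constructor
  · rintro ⟨MM, hchain, hval⟩
    have hMM : MonotoneOn MM (Set.Iic m) :=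
      monotoneOn_of_le_add_one Set.ordConnected_Iic fun i _ _ hi ↦ hchain i hi
    exact ⟨MM 0, MM m, hMM m.zero_le Set.self_mem_Iic m.zero_le,
      positiveOrderIdeal_smul_le_of_flag hR hΔ hg.monotoneOn hMM hval le_rfl,
      by rw [hval 0 m.zero_le, dFlagSet_zero], hval m le_rfl⟩
  · rintro ⟨M₀, Mm, -, h𝔪, hM₀, hMm⟩
    have hex : ∀ i ∈ Set.Icc 1 m, ∃ f ∈ Mm, f.order = g i := fun i hi ↦
      hMm.symm.subset (Or.inr ⟨i, hi, rfl⟩)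
    choose! f hf hfg using hex
    refine ⟨fun i ↦ M₀ ⊔ Submodule.span R (f '' Set.Icc 1 i), fun i _ ↦ ?_,
      fun i hi ↦ valueSet_sup_span_image_Icc h𝔪 hM₀ hg hgΔ hf hfg hi⟩
    dsimp only
    gcongr
    exact i.le_succ

end Flag

section Complex

variable {R : Subalgebra ℂ 𝒪} {M N : Submodule R 𝒪} {c m : ℕ} {D D0 : Set ℕ} {g : ℕ → ℕ}

lemma natCast_ord {x : 𝒪} (hx : x ≠ 0) : (ord x : ℕ∞) = x.order := by
  refine (order_eq_nat.2 ⟨Nat.sInf_mem (exists_coeff_ne_zero_iff_ne_zero.2 hx), fun k hk ↦ ?_⟩).symm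
  exact not_not.1 (Nat.notMem_of_lt_sInf hk)

lemma ne_zero_and_ord_eq_iff {x : 𝒪} {n : ℕ} : x ≠ 0 ∧ ord x = n ↔ x.order = n := by
  obtain rfl | hx := eq_or_ne x 0
  · simp
  · rw [and_iff_right hx, ← natCast_ord hx, Nat.cast_inj]

lemma sGamma_eq_valueSet (R : Subalgebra ℂ 𝒪) : SGamma R = valueSet R := by
  simp only [SGamma, valueSet, ne_zero_and_ord_eq_iff]

lemma deltaM_eq_valueSet (M : Submodule R 𝒪) : DeltaM R M = valueSet M := by
  simp only [DeltaM, valueSet, ne_zero_and_ord_eq_iff]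

lemma zero_mem_sGamma (R : Subalgebra ℂ 𝒪) : 0 ∈ SGamma R :=
  sGamma_eq_valueSet R ▸ ⟨1, R.one_mem, order_one⟩

lemma sGamma_subset_valueSet (h : 0 ∈ valueSet M) : SGamma R ⊆ valueSet M := by
  rw [sGamma_eq_valueSet]
  rintro n ⟨r, hr, hrn⟩
  obtain ⟨x, hx, hx0⟩ := h
  exact ⟨r * x, M.smul_mem ⟨r, hr⟩ hx, by simp [order_mul, hrn, hx0]⟩

lemma isStd_iff_zero_mem_valueSet (hR : ∀ y : 𝒪, (c : ℕ∞) ≤ y.order → y ∈ R) :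
    IsStd R M ↔ 0 ∈ valueSet M := by
  rw [IsStd, and_iff_right (fg_of_conductor hR M)]
  simp only [ne_zero_and_ord_eq_iff]
  rfl

lemma isStd_and_dset_eq_iff (hR : ∀ y : 𝒪, (c : ℕ∞) ≤ y.order → y ∈ R) (hD : D ⊆ Gaps R) :
    IsStd R M ∧ Dset R M = D ↔ valueSet M = SGamma R ∪ D := by
  rw [isStd_iff_zero_mem_valueSet hR, Dset, Gaps, ← Set.sdiff_eq, deltaM_eq_valueSet]
  constructor
  · rintro ⟨h0, rfl⟩
    exact (Set.union_sdiff_cancel (sGamma_subset_valueSet h0)).symm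
  · intro h
    rw [h]
    exact ⟨Or.inl (zero_mem_sGamma R),
      Set.union_sdiff_cancel_left (Set.disjoint_left.2 fun n hn hnD ↦ hD hnD hn).le_bot⟩

lemma mem_positiveOrderIdeal_iff_ord {r : R} :
    r ∈ positiveOrderIdeal R ↔ (r : 𝒪) = 0 ∨ 0 < ord (r : 𝒪) := by
  rw [mem_positiveOrderIdeal, ← order_ne_zero_iff_constCoeff_eq_zero]
  obtain h | h := eq_or_ne (r : 𝒪) 0
  · simp [h]
  · rw [← natCast_ord h, or_iff_right h, Nat.cast_ne_zero, Nat.pos_iff_ne_zero]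

lemma mSmul_le_restrictScalars_iff :
    mSmul R M ≤ N.restrictScalars ℂ ↔ positiveOrderIdeal R • M ≤ N := by
  rw [mSmul, Submodule.span_le, Submodule.smul_le]
  constructor
  · exact fun h r hr y hy ↦ h ⟨r, r.2, y, hy, mem_positiveOrderIdeal_iff_ord.1 hr, rfl⟩
  · rintro h _ ⟨r, hr, y, hy, hr', rfl⟩
    exact h ⟨r, hr⟩ (mem_positiveOrderIdeal_iff_ord.2 hr') y hy

lemma HasConductor.mem_of_le_order (hR : HasConductor R c) (y : 𝒪) (hy : (c : ℕ∞) ≤ y.order) :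
    y ∈ R := by
  obtain ⟨f, rfl⟩ := natCast_le_order_iff_X_pow_dvd.1 hy
  exact hR.2.1 f

namespace IsDFlag

lemma isStd_and_dset_eq_dFlagSet_iff (hflag : IsDFlag R m D0 g) (hR : HasConductor R c) {i : ℕ}
    (hi : i ≤ m) : IsStd R M ∧ Dset R M = DFlagSet D0 g i ↔
      valueSet M = DFlagSet (SGamma R ∪ D0) g i := by
  have hgaps : DFlagSet D0 g i ⊆ Gaps R := Set.union_subset hflag.1 <|
    Set.image_subset_iff.2 fun j hj ↦ (hflag.2.2.1 j hj.1 (hj.2.trans hi)).1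
  rw [isStd_and_dset_eq_iff hR.mem_of_le_order hgaps, DFlagSet, DFlagSet, Set.union_assoc]

lemma isAdmissibleFlag_iff (hflag : IsDFlag R m D0 g) (hR : HasConductor R c) :
    IsAdmissibleFlag R m D0 g ↔
      ∃ MM : ℕ → Submodule R 𝒪, (∀ i < m, MM i ≤ MM (i + 1)) ∧
        ∀ i ≤ m, valueSet (MM i) = DFlagSet (SGamma R ∪ D0) g i :=
  exists_congr fun _ ↦ and_congr_right' <| forall₂_congr fun _ hi ↦
    hflag.isStd_and_dset_eq_dFlagSet_iff hR hi

lemma exists_isStd_pair_iff (hflag : IsDFlag R m D0 g) (hR : HasConductor R c) :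
    (∃ M0 Mm : Submodule R 𝒪, M0 ≤ Mm ∧ mSmul R Mm ≤ M0.restrictScalars ℂ ∧
        IsStd R M0 ∧ IsStd R Mm ∧ Dset R M0 = D0 ∧ Dset R Mm = DFlagSet D0 g m) ↔
      ∃ M0 Mm : Submodule R 𝒪, M0 ≤ Mm ∧ positiveOrderIdeal R • Mm ≤ M0 ∧
        valueSet M0 = SGamma R ∪ D0 ∧
        valueSet Mm = DFlagSet (SGamma R ∪ D0) g m := by
  simp only [← hflag.isStd_and_dset_eq_dFlagSet_iff hR le_rfl,
    ← isStd_and_dset_eq_iff hR.mem_of_le_order hflag.1, mSmul_le_restrictScalars_iff,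
    and_assoc, and_left_comm]

lemma notMem_sGamma_union (hflag : IsDFlag R m D0 g) {i : ℕ} (hi : i ∈ Set.Icc 1 m) :
    g i ∉ SGamma R ∪ D0 :=
  have hgi := hflag.2.2.1 i hi.1 hi.2
  not_or.2 ⟨hgi.1, hgi.2⟩

end IsDFlag

end Complex

/-- A `D`-flag `𝒟 = (D_0,…,D_m)` is admissible iff there exist standard modules
`𝓜_0 ⊆ 𝓜_m` with `𝔪𝓜_m ⊆ 𝓜_0`, `D_{𝓜_0} = D_0` and `D_{𝓜_m} = D_m`. -/
theorem statement10 (R : Subalgebra ℂ 𝒪) (c : ℕ) (hR : HasConductor R c)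
    (m : ℕ) (D0 : Set ℕ) (g : ℕ → ℕ) (hflag : IsDFlag R m D0 g) :
    IsAdmissibleFlag R m D0 g ↔
      ∃ M0 Mm : Submodule ↥R 𝒪, M0 ≤ Mm ∧
        mSmul R Mm ≤ M0.restrictScalars ℂ ∧
        IsStd R M0 ∧ IsStd R Mm ∧
        Dset R M0 = D0 ∧ Dset R Mm = DFlagSet D0 g m := by
  rw [hflag.isAdmissibleFlag_iff hR, hflag.exists_isStd_pair_iff hR]
  exact statement10_general hR.mem_of_le_order ⟨0, Or.inl (zero_mem_sGamma R)⟩ hflag.2.1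
    fun _ ↦ hflag.notMem_sGamma_union

end
end

section
/- For all odd integers u, v with v > 2u > 4, the value semigroup {ν(f) : 0 ≠ f ∈ ℛ} of the subalgebra ℛ = ℂ[z^4, z^{2u}+z^v] + z^{4u+v}ℂ⟦z⟧ of ℂ⟦z⟧ equals the submonoid of ℕ generated by 4, 2u and 2u+v. -/
open PowerSeries

noncomputable section

/-!
Put `y = z^{2u} + z^v` and `w = y² - z^{4u} = 2z^{2u+v} + z^{2v}`, of orders `2u` and `2u + v`. As
`yw` has order `N = 4u + v`, the sum `ℂ⟦z^4⟧ + ℂ⟦z^4⟧y + ℂ⟦z^4⟧w + z^N ℂ⟦z⟧` is closed under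
multiplication, so it contains `ℛ`. The orders of the first three summands lie in the distinct
classes `0`, `2u` and `2u + v` modulo `4`, so nothing cancels and the order of a sum is the order
of one of them, unless it is at least `N`. Finally `0, 2u, 2u + v, N = 2u + (2u + v)` represent all
classes modulo `4`, whence every integer from `N` on lies in the semigroup.
-/

section Order

theorem order_add_eq_left_or_order_right_le {K : Type*} [Semiring K] (φ ψ : K⟦X⟧) :
    (φ + ψ).order = φ.order ∨ ψ.order ≤ (φ + ψ).order := by
  rcases lt_or_ge φ.order ψ.order with hlt | hle
  · exact .inl (by rw [order_add_of_order_ne φ ψ hlt.ne, min_eq_left hlt.le])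
  · exact .inr (by simpa only [min_eq_right hle] using min_order_le_order_add φ ψ)

theorem order_add_mem_union {K : Type*} [Semiring K] {φ ψ : K⟦X⟧} {s t : Set ℕ}
    (hst : Disjoint s t) (hφ : ∀ n : ℕ, φ.order = n → n ∈ s) (hψ : ∀ n : ℕ, ψ.order = n → n ∈ t)
    (n : ℕ) (hn : (φ + ψ).order = n) : n ∈ s ∪ t := by
  rcases eq_or_ne φ.order ψ.order with heq | hne
  · have hφ_top : φ.order = ⊤ := by
      by_contra hfin
      obtain ⟨k, hk⟩ := ENat.ne_top_iff_exists.mp hfin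
      exact Set.disjoint_left.mp hst (hφ k hk.symm) (hψ k (heq ▸ hk.symm))
    have hsum : φ + ψ = 0 := by
      rw [order_eq_top.mp hφ_top, order_eq_top.mp (heq.symm.trans hφ_top), add_zero]
    simp [hsum] at hn
  · rw [order_add_of_order_ne φ ψ hne] at hn
    rcases min_choice φ.order ψ.order with hmin | hmin
    · exact .inl (hφ n (hmin ▸ hn))
    · exact .inr (hψ n (hmin ▸ hn))

theorem order_X_pow_add_X_pow {K : Type*} [Semiring K] [Nontrivial K] {m n : ℕ} (hmn : m < n) :
    (X ^ m + X ^ n : K⟦X⟧).order = m := by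
  have hlt : (m : ℕ∞) < n := by exact_mod_cast hmn
  rw [order_add_of_order_ne _ _ (by simpa only [order_X_pow] using hlt.ne), order_X_pow,
    order_X_pow, min_eq_left hlt.le]

theorem order_sq_X_pow_add_X_pow_sub {K : Type*} [CommRing K] (h2 : (2 : K) ≠ 0) {m n : ℕ}
    (hmn : m < n) : ((X ^ m + X ^ n : K⟦X⟧) ^ 2 - X ^ (2 * m)).order = ↑(m + n) := by
  have : Nontrivial K := ⟨2, 0, h2⟩
  have hlt : ((m + n : ℕ) : ℕ∞) < (2 * n : ℕ) := by exact_mod_cast (by omega : m + n < 2 * n)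
  have hexpand : (X ^ m + X ^ n : K⟦X⟧) ^ 2 - X ^ (2 * m) =
      monomial (m + n) 2 + X ^ (2 * n) := by
    have htwo : C (2 : K) = 2 := map_ofNat C 2
    rw [monomial_eq_C_mul_X_pow, htwo]
    ring
  have hmonomial := order_monomial_of_ne_zero (m + n) (2 : K) h2
  rw [hexpand, order_add_of_order_ne _ _ (by simpa only [hmonomial, order_X_pow] using hlt.ne),
    hmonomial, order_X_pow, min_eq_left hlt.le]

theorem mem_span_X_pow_iff_le_order {K : Type*} [CommSemiring K] {φ : K⟦X⟧} {n : ℕ} :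
    φ ∈ Ideal.span {(X : K⟦X⟧) ^ n} ↔ (n : ℕ∞) ≤ φ.order := by
  rw [Ideal.mem_span_singleton, X_pow_dvd_iff]
  exact ⟨nat_le_order φ n, fun hn i hi ↦
    coeff_of_lt_order i ((ENat.natCast_lt_natCast.mpr hi).trans_le hn)⟩

end Order

section ArithmeticProgression

/-- The arithmetic progression `r, r + m, r + 2m, …`. These are the possible orders of nonzero
multiples of a series of order `r` by series in `z^m`. -/
def arithProg (r m : ℕ) : Set ℕ := {n | ∃ k, n = r + m * k}

theorem arithProg_subset {G : AddSubmonoid ℕ} {r m : ℕ} (hr : r ∈ G) (hm : m ∈ G) :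
    arithProg r m ⊆ G := by
  rintro _ ⟨k, rfl⟩
  exact add_mem hr (by simpa only [smul_eq_mul, mul_comm] using nsmul_mem hm k)

theorem disjoint_arithProg {r s m : ℕ} (hrs : ¬r ≡ s [MOD m]) :
    Disjoint (arithProg r m) (arithProg s m) := by
  rw [Set.disjoint_left]
  rintro _ ⟨k, rfl⟩ ⟨l, hkl⟩
  exact hrs (by simpa [Nat.ModEq] using congrArg (· % m) hkl)

theorem mem_of_four_mul_add_le {G : AddSubmonoid ℕ} {u v n : ℕ} (hu : Odd u) (hv : Odd v)
    (h4 : 4 ∈ G) (h2u : 2 * u ∈ G) (h2uv : 2 * u + v ∈ G) (hn : 4 * u + v ≤ n) : n ∈ G := by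
  have hN : 2 * u + (2 * u + v) ∈ G := add_mem h2u h2uv
  obtain ⟨r, hrG, hrn, hmod⟩ : ∃ r ∈ G, r ≤ n ∧ n % 4 = r % 4 := by
    rw [Nat.odd_iff] at hu hv
    have hclasses : n % 4 = 0 ∨ n % 4 = 2 * u % 4 ∨ n % 4 = (2 * u + v) % 4 ∨
        n % 4 = (2 * u + (2 * u + v)) % 4 := by omega
    rcases hclasses with h | h | h | h
    exacts [⟨0, zero_mem G, by omega, h⟩, ⟨_, h2u, by omega, h⟩, ⟨_, h2uv, by omega, h⟩,
      ⟨_, hN, by omega, h⟩]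
  exact arithProg_subset hrG h4 ⟨(n - r) / 4, by omega⟩

variable {K : Type*} [CommRing K] [NoZeroDivisors K] {m : ℕ}

theorem order_expand_mul_mem_arithProg (hm : m ≠ 0) (φ : K⟦X⟧) {y : K⟦X⟧} {r : ℕ}
    (hy : y.order = r) (n : ℕ) (hn : (expand m hm φ * y).order = n) : n ∈ arithProg r m := by
  rw [order_mul, order_expand, hy] at hn
  cases hφ : φ.order with
  | top => simp [hφ, hm] at hn
  | coe k =>
    rw [hφ, nsmul_eq_mul] at hn
    exact ⟨k, by rw [add_comm]; exact_mod_cast hn.symm⟩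

theorem order_expand_add_mul_add_mul_mem (hm : m ≠ 0) (a b c : K⟦X⟧) {y w : K⟦X⟧} {r s : ℕ}
    (hy : y.order = r) (hw : w.order = s) (h0r : ¬0 ≡ r [MOD m]) (h0s : ¬0 ≡ s [MOD m])
    (hrs : ¬r ≡ s [MOD m]) (n : ℕ)
    (hn : (expand m hm a + expand m hm b * y + expand m hm c * w).order = n) :
    n ∈ arithProg 0 m ∪ arithProg r m ∪ arithProg s m := by
  have : Nontrivial K := by
    by_contra htriv
    have := not_nontrivial_iff_subsingleton.mp htriv
    simp [Subsingleton.elim y 0] at hy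
  have ha : ∀ n : ℕ, (expand m hm a).order = n → n ∈ arithProg 0 m := fun n hn ↦
    order_expand_mul_mem_arithProg hm a order_one n (by rwa [mul_one])
  exact order_add_mem_union
    (Set.disjoint_union_left.mpr ⟨disjoint_arithProg h0s, disjoint_arithProg hrs⟩)
    (order_add_mem_union (disjoint_arithProg h0r) ha (order_expand_mul_mem_arithProg hm b hy))
    (order_expand_mul_mem_arithProg hm c hw) n hn

end ArithmeticProgression

section Decomposition

theorem exists_sub_mem_of_mem_adjoin_pair {K A : Type*} [CommRing K] [CommRing A] [Algebra K A]
    {E : Subalgebra K A} {I : Ideal A} {x y w p : A} (hx : x ∈ E) (hw : y ^ 2 - w ∈ E)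
    (hyw : y * w ∈ I) (hp : p ∈ Algebra.adjoin K {x, y}) :
    ∃ a ∈ E, ∃ b ∈ E, ∃ c ∈ E, p - (a + b * y + c * w) ∈ I := by
  have of_mem {e : A} (he : e ∈ E) : ∃ a ∈ E, ∃ b ∈ E, ∃ c ∈ E, e - (a + b * y + c * w) ∈ I :=
    ⟨e, he, 0, zero_mem E, 0, zero_mem E, by simp⟩
  induction hp using Algebra.adjoin_induction with
  | mem g hg =>
    rcases hg with rfl | rfl
    · exact of_mem hx
    · exact ⟨0, zero_mem E, 1, one_mem E, 0, zero_mem E, by simp⟩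
  | algebraMap k => exact of_mem (E.algebraMap_mem k)
  | add p q _ _ hp hq =>
    obtain ⟨a, ha, b, hb, c, hc, hp⟩ := hp
    obtain ⟨a', ha', b', hb', c', hc', hq⟩ := hq
    refine ⟨a + a', add_mem ha ha', b + b', add_mem hb hb', c + c', add_mem hc hc', ?_⟩
    convert add_mem hp hq using 1
    ring
  | mul p q _ _ hp hq =>
    obtain ⟨a, ha, b, hb, c, hc, hp⟩ := hp
    obtain ⟨a', ha', b', hb', c', hc', hq⟩ := hq
    -- With `e = y² - w`, reduce by `y² = e + w` and `w² = y(yw) - ew`.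
    refine ⟨a * a' + b * b' * (y ^ 2 - w),
      add_mem (mul_mem ha ha') (mul_mem (mul_mem hb hb') hw),
      a * b' + b * a', add_mem (mul_mem ha hb') (mul_mem hb ha'),
      a * c' + c * a' + b * b' - c * c' * (y ^ 2 - w),
      sub_mem (add_mem (add_mem (mul_mem ha hc') (mul_mem hc ha')) (mul_mem hb hb'))
        (mul_mem (mul_mem hc hc') hw), ?_⟩
    convert add_mem (add_mem (I.mul_mem_right q hp) (I.mul_mem_left (a + b * y + c * w) hq))
      (I.mul_mem_left (b * c' + c * b' + c * c' * y) hyw) using 1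
    ring

end Decomposition

section ValueSemigroup

theorem order_eq_ord {f : 𝒪} (hf : f ≠ 0) : f.order = ord f := by
  have hne : {n : ℕ | coeff n f ≠ 0}.Nonempty := exists_coeff_ne_zero_iff_ne_zero.mpr hf
  exact order_eq_nat.mpr ⟨Nat.sInf_mem hne, fun i hi ↦ not_not.mp (Nat.notMem_of_lt_sInf hi)⟩

theorem mem_SGamma_iff {R : Subalgebra ℂ 𝒪} {n : ℕ} :
    n ∈ SGamma R ↔ ∃ f ∈ R, f.order = n := by
  constructor
  · rintro ⟨f, hfR, hf0, rfl⟩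
    exact ⟨f, hfR, order_eq_ord hf0⟩
  · rintro ⟨f, hfR, hfn⟩
    have hf0 : f ≠ 0 := by
      rintro rfl
      simp at hfn
    exact ⟨f, hfR, hf0, by exact_mod_cast (order_eq_ord hf0).symm.trans hfn⟩

/-- The value semigroup `SGamma R`, bundled as a submonoid of `ℕ`. -/
def valueSubmonoid (R : Subalgebra ℂ 𝒪) : AddSubmonoid ℕ where
  carrier := SGamma R
  zero_mem' := mem_SGamma_iff.mpr ⟨1, one_mem R, by simp⟩
  add_mem' := by
    intro m n hm hn
    obtain ⟨f, hf, hfm⟩ := mem_SGamma_iff.mp hm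
    obtain ⟨g, hg, hgn⟩ := mem_SGamma_iff.mp hn
    exact mem_SGamma_iff.mpr ⟨f * g, mul_mem hf hg, by rw [order_mul, hfm, hgn, Nat.cast_add]⟩

theorem adjoin_le_Rring (a b c N : ℕ) :
    Algebra.adjoin ℂ {(X : 𝒪) ^ a, (X : 𝒪) ^ b + (X : 𝒪) ^ c} ≤ Rring a b c N :=
  fun p hp ↦ ⟨p, hp, 0, by simp⟩

theorem closure_le_valueSubmonoid_Rcal {u v : ℕ} (huv : 2 * u < v) :
    AddSubmonoid.closure {4, 2 * u, 2 * u + v} ≤ valueSubmonoid (Rcal u v) := by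
  have hx : (X : 𝒪) ^ 4 ∈ Rcal u v := adjoin_le_Rring _ _ _ _ (Algebra.subset_adjoin (by simp))
  have hy : (X : 𝒪) ^ (2 * u) + X ^ v ∈ Rcal u v :=
    adjoin_le_Rring _ _ _ _ (Algebra.subset_adjoin (by simp))
  have hw : ((X : 𝒪) ^ (2 * u) + X ^ v) ^ 2 - X ^ (2 * (2 * u)) ∈ Rcal u v := by
    rw [show 2 * (2 * u) = 4 * u by ring, pow_mul X 4]
    exact sub_mem (pow_mem hy 2) (pow_mem hx u)
  rw [AddSubmonoid.closure_le]
  rintro n (rfl | rfl | rfl)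
  · exact mem_SGamma_iff.mpr ⟨_, hx, order_X_pow 4⟩
  · exact mem_SGamma_iff.mpr ⟨_, hy, order_X_pow_add_X_pow huv⟩
  · exact mem_SGamma_iff.mpr ⟨_, hw, order_sq_X_pow_add_X_pow_sub two_ne_zero huv⟩

theorem exists_expand_sub_mem_of_mem_Rcal {u v : ℕ} (huv : 2 * u < v) {f : 𝒪}
    (hf : f ∈ Rcal u v) : ∃ a b c y w : 𝒪, y.order = (2 * u : ℕ) ∧ w.order = (2 * u + v : ℕ) ∧
      ((4 * u + v : ℕ) : ℕ∞) ≤ (f - (expand 4 four_ne_zero a + expand 4 four_ne_zero b * y +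
        expand 4 four_ne_zero c * w)).order := by
  obtain ⟨p, hp, g, rfl⟩ := hf
  set y : 𝒪 := X ^ (2 * u) + X ^ v
  set w : 𝒪 := y ^ 2 - X ^ (2 * (2 * u))
  have hy : y.order = (2 * u : ℕ) := order_X_pow_add_X_pow huv
  have hw : w.order = (2 * u + v : ℕ) := order_sq_X_pow_add_X_pow_sub two_ne_zero huv
  have hyw : y * w ∈ Ideal.span {(X : 𝒪) ^ (4 * u + v)} := by
    rw [mem_span_X_pow_iff_le_order, order_mul, hy, hw, ← Nat.cast_add]
    exact_mod_cast (by omega : 4 * u + v ≤ 2 * u + (2 * u + v))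
  have hx_range : (X : 𝒪) ^ 4 ∈ (expand 4 four_ne_zero : 𝒪 →ₐ[ℂ] 𝒪).range :=
    ⟨X, expand_X 4 four_ne_zero⟩
  have hw_range : y ^ 2 - w ∈ (expand 4 four_ne_zero : 𝒪 →ₐ[ℂ] 𝒪).range := by
    rw [sub_sub_cancel, show 2 * (2 * u) = 4 * u by ring, pow_mul]
    exact pow_mem hx_range u
  obtain ⟨_, ⟨a, rfl⟩, _, ⟨b, rfl⟩, _, ⟨c, rfl⟩, hmem⟩ :=
    exists_sub_mem_of_mem_adjoin_pair hx_range hw_range hyw hp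
  refine ⟨a, b, c, y, w, hy, hw, mem_span_X_pow_iff_le_order.mp ?_⟩
  rw [add_sub_right_comm]
  exact add_mem hmem (Ideal.mul_mem_right g _ (Ideal.mem_span_singleton_self _))

theorem SGamma_Rcal_subset {G : AddSubmonoid ℕ} {u v : ℕ} (hu : Odd u) (hv : Odd v)
    (huv : 2 * u < v) (h4 : 4 ∈ G) (h2u : 2 * u ∈ G) (h2uv : 2 * u + v ∈ G) :
    SGamma (Rcal u v) ⊆ G := by
  intro n hn
  obtain ⟨f, hf, hfn⟩ := mem_SGamma_iff.mp hn
  obtain ⟨a, b, c, y, w, hy, hw, hle⟩ := exists_expand_sub_mem_of_mem_Rcal huv hf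
  set f₀ := expand 4 four_ne_zero a + expand 4 four_ne_zero b * y + expand 4 four_ne_zero c * w
  rcases order_add_eq_left_or_order_right_le f₀ (f - f₀) with hf₀ | hrest
  · rw [add_sub_cancel, hfn] at hf₀
    rw [Nat.odd_iff] at hu hv
    rcases order_expand_add_mul_add_mul_mem four_ne_zero a b c hy hw
      (by rw [Nat.ModEq]; omega) (by rw [Nat.ModEq]; omega) (by rw [Nat.ModEq]; omega)
      n hf₀.symm with (hn | hn) | hn
    exacts [arithProg_subset (zero_mem G) h4 hn, arithProg_subset h2u h4 hn,
      arithProg_subset h2uv h4 hn]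
  · rw [add_sub_cancel, hfn] at hrest
    exact mem_of_four_mul_add_le hu hv h4 h2u h2uv (by exact_mod_cast hle.trans hrest)

end ValueSemigroup

/-- For odd `u,v` with `v > 2u > 4`, the value semigroup of
`ℛ = ℂ[z^4, z^{2u}+z^v] + z^{4u+v}ℂ⟦z⟧` is the submonoid of `ℕ` generated by
`4`, `2u` and `2u+v`. -/
theorem statement15 (u v : ℕ) (hu : Odd u) (hv : Odd v)
    (h4 : 4 < 2*u) (huv : 2*u < v) :
    SGamma (Rcal u v) = ↑(AddSubmonoid.closure ({4, 2*u, 2*u+v} : Set ℕ)) := by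
  have subset_closure := AddSubmonoid.subset_closure (s := {4, 2 * u, 2 * u + v})
  exact (SGamma_Rcal_subset hu hv huv (subset_closure (by simp)) (subset_closure (by simp))
    (subset_closure (by simp))).antisymm (closure_le_valueSubmonoid_Rcal huv)

end
end
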